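/- Let f : X → Y be an η-quasisymmetry between metric spaces and let A, B ⊆ X be nonempty compact sets with |A ∪ B| > 0. Then dist(f(A), f(B)) ≤ η(2·dist(A,B)/|A ∪ B|)·|f(A) ∪ f(B)|. -/

import Mathlib

open Set Metric MeasureTheory ProbabilityTheory Filter
open scoped ENNReal NNReal Classical

noncomputable section

/-- A distortion function: a homeomorphism of `[0,∞)` onto itself
(equivalently, a continuous strictly increasing surjection of `[0,∞)` with `η 0 = 0`). -/
def IsDistortion (η : ℝ → ℝ) : Prop :=
  ContinuousOn η (Set.Ici 0) ∧ StrictMonoOn η (Set.Ici 0) ∧ η 0 = 0 ∧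
    Set.SurjOn η (Set.Ici 0) (Set.Ici 0)

/-- `f` is an `η`-quasisymmetry on the set `E`:
it is injective on `E` and satisfies the quasisymmetry inequality on points of `E`. -/
def IsQSOn {X Y : Type*} [MetricSpace X] [MetricSpace Y] (η : ℝ → ℝ) (f : X → Y)
    (E : Set X) : Prop :=
  Set.InjOn f E ∧ ∀ x ∈ E, ∀ y ∈ E, ∀ z ∈ E, x ≠ z →
    dist (f x) (f y) ≤ η (dist x y / dist x z) * dist (f x) (f z)

/-- `f` is a `β`-power quasisymmetry on `E`: an `η`-quasisymmetry with
`η t = C * max (t ^ β) (t ^ (1 / β))` for some `C > 0`. -/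
def IsPowerQSOn {X Y : Type*} [MetricSpace X] [MetricSpace Y] (β : ℝ) (f : X → Y)
    (E : Set X) : Prop :=
  ∃ C : ℝ, 0 < C ∧ IsQSOn (fun t => C * max (t ^ β) (t ^ (1 / β))) f E

/-- Distance between two sets: `inf {dist a b : a ∈ A, b ∈ B}`. -/
def setDist {X : Type*} [MetricSpace X] (A B : Set X) : ℝ :=
  sInf (Set.image2 dist A B)

/-- The closed axis-parallel cube with lower corner `c` and side length `l`. -/
def cube {d : ℕ} (c : Fin d → ℝ) (l : ℝ) : Set (EuclideanSpace ℝ (Fin d)) :=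
  {x | ∀ i, c i ≤ x i ∧ x i ≤ c i + l}

/-- Lower corner of the subcube with address `a` when the cube with lower corner `c` and
side `l` is divided into `K ^ d` congruent subcubes. -/
def childCorner {d : ℕ} (c : Fin d → ℝ) (l : ℝ) (K : ℕ) (a : Fin d → Fin K) : Fin d → ℝ :=
  fun i => c i + l / K * (a i : ℝ)

/-- Side length `N ^ (-m*n)` of level-`n` cubes in the `(N,m)`-fat Cantor construction. -/
def fatSide (N m n : ℕ) : ℝ := ((N : ℝ) ^ (m * n))⁻¹

/-- `𝓕` is the sequence of families of cubes of an `(N,m)`-fat Cantor construction in `[0,1]^d`: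
`𝓕 0 = {[0,1]^d}`, and each cube `Q ∈ 𝓕 n` is divided into `N^(m*d)` congruent subcubes of which
exactly one is removed, `𝓕 (n+1)` consisting of all retained subcubes. -/
def IsFatCantorFamilies (d N m : ℕ) (𝓕 : ℕ → Set (Set (EuclideanSpace ℝ (Fin d)))) : Prop :=
  𝓕 0 = {cube (fun _ => 0) 1} ∧
  (∀ n, ∀ Q ∈ 𝓕 n, ∃ c : Fin d → ℝ, Q = cube c (fatSide N m n) ∧
    ∃ a₀ : Fin d → Fin (N ^ m),
      {Q' ∈ 𝓕 (n + 1) | Q' ⊆ Q} =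
        {Q' | ∃ a : Fin d → Fin (N ^ m), a ≠ a₀ ∧
          Q' = cube (childCorner c (fatSide N m n) (N ^ m) a) (fatSide N m (n + 1))}) ∧
  (∀ n, ∀ Q' ∈ 𝓕 (n + 1), ∃ Q ∈ 𝓕 n, Q' ⊆ Q)

/-- `F` is an `(N,m)`-fat Cantor set in `[0,1]^d`. -/
def IsFatCantorSet (d N m : ℕ) (F : Set (EuclideanSpace ℝ (Fin d))) : Prop :=
  ∃ 𝓕, IsFatCantorFamilies d N m 𝓕 ∧ F = ⋂ n, ⋃₀ 𝓕 n

/-- Side length `∏_{m=1}^n (N m)⁻¹` of level-`n` cubes of a dense-Cantor construction with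
subdivision sequence `N`. -/
def denseSide (N : ℕ → ℕ) (n : ℕ) : ℝ := ∏ m ∈ Finset.Icc 1 n, ((N m : ℝ))⁻¹

/-- `𝓔` is the sequence of families of cubes of a dense-Cantor construction in `[0,1]^d`
with subdivision sequence `N`: `𝓔 0 = {[0,1]^d}`, every cube of `𝓔 (n+1)` is one of the
`(N (n+1))^d` congruent subcubes of a cube of `𝓔 n`, and every cube of `𝓔 n` has at least one
retained subcube in `𝓔 (n+1)`. -/
def IsDenseCantorFamilies (d : ℕ) (N : ℕ → ℕ)
    (𝓔 : ℕ → Set (Set (EuclideanSpace ℝ (Fin d)))) : Prop :=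
  𝓔 0 = {cube (fun _ => 0) 1} ∧
  (∀ n, ∀ Q' ∈ 𝓔 (n + 1), ∃ Q ∈ 𝓔 n, Q' ⊆ Q ∧ ∃ c : Fin d → ℝ, Q = cube c (denseSide N n) ∧
      ∃ a : Fin d → Fin (N (n + 1)),
        Q' = cube (childCorner c (denseSide N n) (N (n + 1)) a) (denseSide N (n + 1))) ∧
  (∀ n, ∀ Q ∈ 𝓔 n, ∃ Q' ∈ 𝓔 (n + 1), Q' ⊆ Q)

/-- A (possibly degenerate) line segment parallel to the `d`-th coordinate direction
(the kernel of the projection to the first `d-1` coordinates). -/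
def IsVerticalSeg {d : ℕ} (A : Set (EuclideanSpace ℝ (Fin d))) : Prop :=
  ∃ x y : EuclideanSpace ℝ (Fin d), A = segment ℝ x y ∧
    ∀ i : Fin d, (i : ℕ) < d - 1 → x i = y i

/-- The dense-Cantor construction `𝓔` is `(Δ_n)_n`-dense: for all sufficiently large `n` and
every `Q ∈ 𝓔 n`, every vertical line segment contained in `Q \ ⋃ 𝓔 (n+1)` has diameter at most
`Δ (n+1) * diam Q`. -/
def IsDeltaDense {d : ℕ} (Δ : ℕ → ℝ) (𝓔 : ℕ → Set (Set (EuclideanSpace ℝ (Fin d)))) : Prop :=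
  ∃ n₀ : ℕ, ∀ n, n₀ ≤ n → ∀ Q ∈ 𝓔 n, ∀ A : Set (EuclideanSpace ℝ (Fin d)),
    IsVerticalSeg A → A ⊆ Q \ ⋃₀ 𝓔 (n + 1) →
      Metric.diam A ≤ Δ (n + 1) * Metric.diam Q

/-- The dyadic cube of level `k` in `[0,1]^d` with address `a`. -/
def dyCube (d k : ℕ) (a : Fin d → Fin (2 ^ k)) : Set (EuclideanSpace ℝ (Fin d)) :=
  cube (fun i => (a i : ℝ) / 2 ^ k) (((2 : ℝ) ^ k)⁻¹)

/-- Lower corner of the level-`n` `N`-adic cube of `[0,1]^d` with address word `w`. -/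
def fatCorner (d N : ℕ) {n : ℕ} (w : Fin n → Fin d → Fin N) : Fin d → ℝ :=
  fun i => ∑ j : Fin n, ((N : ℝ) ^ (j.val + 1))⁻¹ * (w j i : ℝ)

/-- In fractal percolation with retention coins `X`, the cube with address word `w` survives if
all of its ancestors (including itself) are retained. -/
def FatSurvives {Ω : Type*} {d N : ℕ} (X : ∀ n : ℕ, (Fin n → Fin d → Fin N) → Ω → Bool)
    (ω : Ω) {n : ℕ} (w : Fin n → Fin d → Fin N) : Prop :=
  ∀ m : ℕ, ∀ h : m ≤ n, 1 ≤ m → X m (fun j => w (Fin.castLE h j)) ω = true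

/-- The fractal percolation limit set determined by the retention coins `X` at sample `ω`:
the intersection over `n` of the unions of surviving level-`n` `N`-adic cubes. -/
def fatPerc {Ω : Type*} (d N : ℕ) (X : ∀ n : ℕ, (Fin n → Fin d → Fin N) → Ω → Bool)
    (ω : Ω) : Set (EuclideanSpace ℝ (Fin d)) :=
  ⋂ n : ℕ, ⋃ w : Fin n → Fin d → Fin N, ⋃ (_ : FatSurvives X ω w),
    cube (fatCorner d N w) (((N : ℝ) ^ n)⁻¹)

/-- Lower corner of the level-`n` cube with address word `w` in the subdivision scheme where the
level-`j` cubes have side `denseSide N j`. -/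
def denseCorner (d : ℕ) (N : ℕ → ℕ) {n : ℕ}
    (w : (j : Fin n) → Fin d → Fin (N (j.val + 1))) : Fin d → ℝ :=
  fun i => ∑ j : Fin n, denseSide N (j.val + 1) * (w j i : ℝ)

/-- Survival of the cube with address word `w` in dense fractal percolation with coins `X`. -/
def DenseSurvives {Ω : Type*} {d : ℕ} {N : ℕ → ℕ}
    (X : ∀ n : ℕ, ((j : Fin n) → Fin d → Fin (N (j.val + 1))) → Ω → Bool) (ω : Ω) {n : ℕ}
    (w : (j : Fin n) → Fin d → Fin (N (j.val + 1))) : Prop :=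
  ∀ m : ℕ, ∀ h : m ≤ n, 1 ≤ m → X m (fun j => w (Fin.castLE h j)) ω = true

/-- The dense fractal percolation limit set determined by the retention coins `X` at `ω`. -/
def densePerc {Ω : Type*} (d : ℕ) (N : ℕ → ℕ)
    (X : ∀ n : ℕ, ((j : Fin n) → Fin d → Fin (N (j.val + 1))) → Ω → Bool) (ω : Ω) :
    Set (EuclideanSpace ℝ (Fin d)) :=
  ⋂ n : ℕ, ⋃ w : (j : Fin n) → Fin d → Fin (N (j.val + 1)), ⋃ (_ : DenseSurvives X ω w),
    cube (denseCorner d N w) (denseSide N n)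

/-- The function `g_N (s) = 1 - (1-s)^N - N s (1-s)^(N-1) + N^(-5)`. -/
def gFun (N : ℕ) (s : ℝ) : ℝ :=
  1 - (1 - s) ^ N - N * s * (1 - s) ^ (N - 1) + ((N : ℝ) ^ 5)⁻¹

end

/-!
For any `a ∈ A`, some `z ∈ A ∪ B` satisfies `|A ∪ B| ≤ 2 dist(a, z)`, up to an arbitrarily small
error, by the triangle inequality. Taking `a` and `b ∈ B` almost realizing `dist(A, B)`, the
quasisymmetry inequality for the triple `(a, b, z)` gives the bound with `η r` for every
`r > 2 dist(A, B) / |A ∪ B|`, and continuity of `η` lets `r` decrease to this ratio.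
-/

theorem exists_lt_two_mul_dist_of_lt_diam {X : Type*} [PseudoMetricSpace X] {S : Set X} {r : ℝ}
    (hr : 0 ≤ r) (hrS : r < Metric.diam S) (a : X) : ∃ z ∈ S, r < 2 * dist a z := by
  contrapose! hrS
  refine Metric.diam_le_of_forall_dist_le hr fun x hx y hy => ?_
  linarith [dist_triangle_left x y a, hrS x hx, hrS y hy]

theorem isBounded_of_diam_pos {X : Type*} [PseudoMetricSpace X] {S : Set X}
    (hS : 0 < Metric.diam S) : Bornology.IsBounded S :=
  not_imp_comm.1 Metric.diam_eq_zero_of_unbounded hS.ne'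

section SetDist

variable {X : Type*} [MetricSpace X] {A B : Set X}

theorem setDist_nonneg (A B : Set X) : 0 ≤ setDist A B := by
  refine Real.sInf_nonneg ?_
  rintro _ ⟨a, -, b, -, rfl⟩
  exact dist_nonneg

theorem setDist_le_dist {a b : X} (ha : a ∈ A) (hb : b ∈ B) : setDist A B ≤ dist a b := by
  refine csInf_le ⟨0, ?_⟩ (mem_image2_of_mem ha hb)
  rintro _ ⟨x, -, y, -, rfl⟩
  exact dist_nonneg

theorem exists_dist_lt_of_setDist_lt (hA : A.Nonempty) (hB : B.Nonempty) {r : ℝ}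
    (hr : setDist A B < r) : ∃ a ∈ A, ∃ b ∈ B, dist a b < r := by
  obtain ⟨_, ⟨a, ha, b, hb, rfl⟩, hab⟩ := exists_lt_of_csInf_lt (hA.image2 hB) hr
  exact ⟨a, ha, b, hb, hab⟩

theorem exists_dist_div_dist_le (hA : A.Nonempty) (hB : B.Nonempty)
    (hAB : 0 < Metric.diam (A ∪ B)) {r : ℝ} (hr : 2 * setDist A B / Metric.diam (A ∪ B) < r) :
    ∃ a ∈ A, ∃ b ∈ B, ∃ z ∈ A ∪ B, a ≠ z ∧ dist a b / dist a z ≤ r := by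
  have hr_pos : 0 < r :=
    (div_nonneg (mul_nonneg zero_le_two (setDist_nonneg A B)) hAB.le).trans_lt hr
  obtain ⟨a, ha, b, hb, hab⟩ : ∃ a ∈ A, ∃ b ∈ B, dist a b < r * Metric.diam (A ∪ B) / 2 := by
    rw [div_lt_iff₀ hAB] at hr
    exact exists_dist_lt_of_setDist_lt hA hB (by linarith)
  obtain ⟨z, hz, haz⟩ : ∃ z ∈ A ∪ B, 2 * dist a b / r < 2 * dist a z := by
    refine exists_lt_two_mul_dist_of_lt_diam (by positivity) ?_ a
    rw [div_lt_iff₀' hr_pos]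
    linarith
  have haz_pos : 0 < dist a z :=
    pos_of_mul_pos_right (lt_of_le_of_lt (by positivity) haz) zero_le_two
  refine ⟨a, ha, b, hb, z, hz, dist_pos.1 haz_pos, ?_⟩
  rw [div_lt_iff₀' hr_pos] at haz
  rw [div_le_iff₀ haz_pos]
  linarith

end SetDist

namespace IsQSOn

variable {X Y : Type*} [MetricSpace X] [MetricSpace Y] {η : ℝ → ℝ} {f : X → Y} {E : Set X}

theorem mono {S : Set X} (hf : IsQSOn η f E) (hS : S ⊆ E) : IsQSOn η f S :=
  ⟨hf.1.mono hS, fun x hx y hy z hz => hf.2 x (hS hx) y (hS hy) z (hS hz)⟩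

theorem distortion_nonneg (hf : IsQSOn η f E) (hη : MonotoneOn η (Ici 0)) (hE : E.Nontrivial)
    {t : ℝ} (ht : 0 ≤ t) : 0 ≤ η t := by
  obtain ⟨x, hx, z, hz, hxz⟩ := hE
  have hfxz : 0 < dist (f x) (f z) := dist_pos.2 (hf.1.ne hx hz hxz)
  have h0 : 0 ≤ η 0 * dist (f x) (f z) := by
    simpa only [dist_self, zero_div] using hf.2 x hx x hx z hz hxz
  exact (nonneg_of_mul_nonneg_left h0 hfxz).trans (hη self_mem_Ici ht ht)

theorem dist_le_of_div_le (hf : IsQSOn η f E) (hη : MonotoneOn η (Ici 0)) {x y z : X}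
    (hx : x ∈ E) (hy : y ∈ E) (hz : z ∈ E) (hxz : x ≠ z) {t : ℝ}
    (ht : dist x y / dist x z ≤ t) : dist (f x) (f y) ≤ η t * dist (f x) (f z) := by
  have hratio : 0 ≤ dist x y / dist x z := by positivity
  calc
    dist (f x) (f y) ≤ η (dist x y / dist x z) * dist (f x) (f z) := hf.2 x hx y hy z hz hxz
    _ ≤ η t * dist (f x) (f z) := by
      gcongr
      exact hη hratio (hratio.trans ht) ht

theorem isBounded_image (hf : IsQSOn η f E) (hη : MonotoneOn η (Ici 0))
    (hE : Bornology.IsBounded E) : Bornology.IsBounded (f '' E) := by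
  obtain hE' | ⟨x, hx, z, hz, hxz⟩ := E.subsingleton_or_nontrivial
  · exact (hE'.image f).finite.isBounded
  refine (isBounded_iff_subset_closedBall (f x)).2
    ⟨η (Metric.diam E / dist x z) * dist (f x) (f z), ?_⟩
  rintro _ ⟨y, hy, rfl⟩
  rw [mem_closedBall']
  refine hf.dist_le_of_div_le hη hx hy hz hxz ?_
  gcongr
  exact Metric.dist_le_diam_of_mem hE hx hy

theorem setDist_image_le_of_lt {A B : Set X} (hf : IsQSOn η f (A ∪ B))
    (hη : MonotoneOn η (Ici 0)) (hA : A.Nonempty) (hB : B.Nonempty)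
    (hAB : 0 < Metric.diam (A ∪ B)) {r : ℝ} (hr : 2 * setDist A B / Metric.diam (A ∪ B) < r) :
    setDist (f '' A) (f '' B) ≤ η r * Metric.diam (f '' A ∪ f '' B) := by
  obtain ⟨a, ha, b, hb, z, hz, haz, hratio⟩ := exists_dist_div_dist_le hA hB hAB hr
  have hr0 : 0 ≤ r := le_trans (by positivity) hratio
  have hηr : 0 ≤ η r := hf.distortion_nonneg hη ⟨a, .inl ha, z, hz, haz⟩ hr0
  calc
    setDist (f '' A) (f '' B) ≤ dist (f a) (f b) :=
      setDist_le_dist (mem_image_of_mem f ha) (mem_image_of_mem f hb)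
    _ ≤ η r * dist (f a) (f z) := hf.dist_le_of_div_le hη (.inl ha) (.inr hb) hz haz hratio
    _ ≤ η r * Metric.diam (f '' A ∪ f '' B) := by
      rw [← image_union]
      gcongr
      exact Metric.dist_le_diam_of_mem (hf.isBounded_image hη (isBounded_of_diam_pos hAB))
        (mem_image_of_mem f (.inl ha)) (mem_image_of_mem f hz)

end IsQSOn

theorem qs_setDist_le_general {X Y : Type*} [MetricSpace X] [MetricSpace Y] {η : ℝ → ℝ}
    (hη_cont : ContinuousOn η (Ici 0)) (hη_mono : MonotoneOn η (Ici 0)) {f : X → Y}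
    {A B : Set X} (hf : IsQSOn η f (A ∪ B)) (hA : A.Nonempty) (hB : B.Nonempty)
    (hAB : 0 < Metric.diam (A ∪ B)) :
    setDist (f '' A) (f '' B) ≤
      η (2 * setDist A B / Metric.diam (A ∪ B)) * Metric.diam (f '' A ∪ f '' B) := by
  set t := 2 * setDist A B / Metric.diam (A ∪ B)
  have ht : 0 ≤ t := div_nonneg (mul_nonneg zero_le_two (setDist_nonneg A B)) hAB.le
  have hη_right : Tendsto η (nhdsWithin t (Ioi t)) (nhds (η t)) :=
    (hη_cont t ht).mono fun r hr => ht.trans (le_of_lt hr)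
  refine ge_of_tendsto (hη_right.mul_const _) ?_
  filter_upwards [self_mem_nhdsWithin] with r hr
  exact hf.setDist_image_le_of_lt hη_mono hA hB hAB hr

/-- For an `η`-quasisymmetry `f` and nonempty compact sets `A, B` with
`|A ∪ B| > 0`, one has `dist(f A, f B) ≤ η(2 dist(A,B)/|A ∪ B|) · |f A ∪ f B|`. -/
theorem qs_setDist_le {X Y : Type*} [MetricSpace X] [MetricSpace Y]
    (η : ℝ → ℝ) (hη : IsDistortion η) (f : X → Y) (hf : IsQSOn η f Set.univ)
    (A B : Set X) (hAne : A.Nonempty) (hBne : B.Nonempty)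
    (hAc : IsCompact A) (hBc : IsCompact B) (hAB : 0 < Metric.diam (A ∪ B)) :
    setDist (f '' A) (f '' B) ≤
      η (2 * setDist A B / Metric.diam (A ∪ B)) * Metric.diam (f '' A ∪ f '' B) :=
  qs_setDist_le_general hη.1 hη.2.1.monotoneOn (hf.mono (subset_univ _)) hAne hBne hAB
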